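/- (Existence and uniqueness of the stabilizing positive semidefinite solution of the algebraic Riccati equation) Let n, m, p be finite types, A : Matrix n n ℂ, B : Matrix n m ℂ, C : Matrix p n ℂ. Assume (A, B) is stabilizable (for every λ ∈ ℂ with Re λ ≥ 0 and every y : n → ℂ, if Aᴴ *ᵥ y = λ • y and Bᴴ *ᵥ y = 0 then y = 0) and (C, A) is detectable (for every λ ∈ ℂ with Re λ ≥ 0 and every x : n → ℂ, if A *ᵥ x = λ • x and C *ᵥ x = 0 then x = 0). Let G = B * Bᴴ and K = Cᴴ * C. Then there exists a unique matrix E : Matrix n n ℂ such that E is positive semidefinite, Aᴴ * E + E * A - E * G * E + K = 0, and A - G * E is stable (every λ ∈ spectrum ℂ (A - G * E) satisfies Re λ < 0). -/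

import Mathlib

open Matrix
open scoped ComplexOrder

/-!
A matrix `E` solves the Riccati equation iff its graph `{(x, E x)}` is invariant under the
Hamiltonian matrix `H = [A, -G; -K, -Aᴴ]`, and `A - G E` is then the restriction of `H` to this
graph. So the stabilizing solution comes from the stable spectral subspace of `H`. Positivity of
`G` and `K` and the Hautus tests at imaginary `lam` exclude imaginary eigenvalues of `H`; since
`J H = -Hᴴ J`, the stable and the antistable spectral subspaces are then `J`-isotropic and
complementary, hence Lagrangian. Stabilizability makes the stable subspace a graph, isotropy makes
`E` Hermitian, and `E` is positive semidefinite because it solves a Lyapunov equation with Hurwitz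
coefficient `A - G E`. The difference of two stabilizing solutions solves a homogeneous Sylvester
equation with disjoint spectra, so it vanishes.
-/

section SpectralSubspace

variable {K V W : Type*} [Field K] [AddCommGroup V] [Module K V] [AddCommGroup W] [Module K W]

/-- The spectral subspace of `f` for a set `s` of scalars: the sum of the generalized eigenspaces
whose eigenvalue lies in `s`. -/
def spectralSubspace (f : Module.End K V) (s : Set K) : Submodule K V :=
  ⨆ μ ∈ s, f.maxGenEigenspace μ

theorem mapsTo_spectralSubspace (f : Module.End K V) (s : Set K) :
    Set.MapsTo f (spectralSubspace f s) (spectralSubspace f s) := by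
  suffices spectralSubspace f s ≤ (spectralSubspace f s).comap f from this
  refine iSup₂_le fun μ hμ v hv ↦ ?_
  exact le_iSup₂_of_le (f := fun μ _ ↦ f.maxGenEigenspace μ) μ hμ le_rfl
    (f.mapsTo_maxGenEigenspace_of_comm rfl μ hv)

theorem mem_of_hasEigenvector_of_mem_spectralSubspace {f : Module.End K V} {s : Set K} {μ : K}
    {v : V} (hv : f.HasEigenvector μ v) (hvs : v ∈ spectralSubspace f s) : μ ∈ s := by
  by_contra hμ
  have hdisj : Disjoint (f.maxGenEigenspace μ) (spectralSubspace f s) :=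
    f.independent_maxGenEigenspace.disjoint_biSup hμ
  exact hv.2 (Submodule.disjoint_def.mp hdisj v (f.eigenspace_le_maxGenEigenspace hv.1) hvs)

theorem spectralSubspace_sup_compl [IsAlgClosed K] [FiniteDimensional K V]
    (f : Module.End K V) (s : Set K) : spectralSubspace f s ⊔ spectralSubspace f sᶜ = ⊤ := by
  rw [← f.iSup_maxGenEigenspace_eq_top, iSup_split _ (· ∈ s)]
  rfl

theorem maxGenEigenspace_eq_bot_of_not_hasEigenvalue {f : Module.End K V} {μ : K}
    (h : ¬ f.HasEigenvalue μ) : f.maxGenEigenspace μ = ⊥ := by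
  by_contra hne
  exact h (Module.End.HasUnifEigenvalue.lt (k := ⊤) zero_lt_one hne)

theorem eq_zero_of_comp_eq_comp [IsAlgClosed K] [FiniteDimensional K V]
    {f : Module.End K V} {g : Module.End K W} {X : V →ₗ[K] W} (h : g ∘ₗ X = X ∘ₗ f)
    (hdisj : ∀ μ, f.HasEigenvalue μ → ¬ g.HasEigenvalue μ) : X = 0 := by
  have hmap {μ : K} {v : V} (hv : v ∈ f.maxGenEigenspace μ) : X v ∈ g.maxGenEigenspace μ := by
    obtain ⟨k, hk⟩ := (f.mem_maxGenEigenspace μ v).mp hv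
    have hshift : (g - μ • 1) ∘ₗ X = X ∘ₗ (f - μ • 1) := by
      ext u
      simpa using LinearMap.congr_fun h u
    refine (g.mem_maxGenEigenspace μ _).mpr ⟨k, ?_⟩
    rw [← LinearMap.comp_apply, Module.End.commute_pow_left_of_commute hshift,
      LinearMap.comp_apply, hk, map_zero]
  rw [← LinearMap.ker_eq_top, eq_top_iff, ← f.iSup_maxGenEigenspace_eq_top]
  refine iSup_le fun μ v hv ↦ LinearMap.mem_ker.mpr ?_
  by_cases hf : f.HasEigenvalue μ
  · simpa [maxGenEigenspace_eq_bot_of_not_hasEigenvalue (hdisj μ hf)] using hmap hv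
  · rw [maxGenEigenspace_eq_bot_of_not_hasEigenvalue hf, Submodule.mem_bot] at hv
    rw [hv, map_zero]

end SpectralSubspace

section IntertwiningMatrices

variable {K ι κ : Type*} [Field K] [Fintype ι] [Fintype κ]

theorem mem_spectrum_iff_exists_mulVec_eq_smul [DecidableEq ι] {M : Matrix ι ι K} {μ : K} :
    μ ∈ spectrum K M ↔ ∃ v ≠ 0, M *ᵥ v = μ • v := by
  rw [← spectrum_toLin', ← Module.End.hasEigenvalue_iff_mem_spectrum]
  constructor
  · intro h
    obtain ⟨v, hv⟩ := h.exists_hasEigenvector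
    exact ⟨v, hv.2, by simpa using hv.apply_eq_smul⟩
  · rintro ⟨v, hv, h⟩
    exact Module.End.hasEigenvalue_of_hasEigenvector
      ⟨Module.End.mem_eigenspace_iff.mpr (by simpa using h), hv⟩

theorem spectrum_subset_of_mul_eq_mul [DecidableEq ι] [DecidableEq κ] {M : Matrix ι ι K}
    {N : Matrix κ κ K} {S : Matrix ι κ K} (hS : Function.Injective S.mulVec)
    (h : M * S = S * N) : spectrum K N ⊆ spectrum K M := by
  intro μ hμ
  obtain ⟨a, ha, hNa⟩ := mem_spectrum_iff_exists_mulVec_eq_smul.mp hμ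
  have hSa : S *ᵥ a ≠ 0 := fun h ↦ ha (hS (by simp [h]))
  refine mem_spectrum_iff_exists_mulVec_eq_smul.mpr ⟨S *ᵥ a, hSa, ?_⟩
  rw [mulVec_mulVec, h, ← mulVec_mulVec, hNa, mulVec_smul]

theorem exists_mul_eq_one_of_mulVec_injective [DecidableEq κ] {X : Matrix ι κ K}
    (hX : Function.Injective X.mulVec) : ∃ L : Matrix κ ι K, L * X = 1 := by
  classical
  obtain ⟨g, hg⟩ := LinearMap.exists_leftInverse_of_injective (toLin' X)
    (LinearMap.ker_eq_bot.mpr hX)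
  refine ⟨LinearMap.toMatrix' g, ?_⟩
  rw [← LinearMap.toMatrix'_toLin' X, ← LinearMap.toMatrix'_comp, hg, LinearMap.toMatrix'_id]

theorem exists_mul_eq_one_and_mul_eq_one [StarRing K] [DecidableEq ι] [DecidableEq κ]
    {X : Matrix ι κ K} (hX : Function.Injective X.mulVec)
    (hX' : Function.Injective Xᴴ.mulVec) : ∃ R : Matrix κ ι K, X * R = 1 ∧ R * X = 1 := by
  obtain ⟨R, hRX⟩ := exists_mul_eq_one_of_mulVec_injective hX
  obtain ⟨L, hLX⟩ := exists_mul_eq_one_of_mulVec_injective hX'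
  have hXL : X * Lᴴ = 1 := by simpa using congrArg conjTranspose hLX
  have hRL : R = Lᴴ := by
    rw [← Matrix.mul_one R, ← hXL, ← Matrix.mul_assoc, hRX, Matrix.one_mul]
  exact ⟨R, hRL ▸ hXL, hRX⟩

theorem exists_mem_mulVec_eq_smul [IsAlgClosed K] {M : Matrix ι ι K} {W : Submodule K (ι → K)}
    (hW : ∀ v ∈ W, M *ᵥ v ∈ W) (hne : W ≠ ⊥) : ∃ v ∈ W, v ≠ 0 ∧ ∃ μ : K, M *ᵥ v = μ • v := by
  have : Nontrivial W := Submodule.nontrivial_iff_ne_bot.mpr hne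
  obtain ⟨μ, hμ⟩ := Module.End.exists_eigenvalue (M.mulVecLin.restrict hW)
  obtain ⟨v, hv⟩ := hμ.exists_hasEigenvector
  refine ⟨v, v.2, by simpa using hv.2, μ, ?_⟩
  exact congrArg Subtype.val hv.apply_eq_smul

theorem sylvester_eq_zero [IsAlgClosed K] [DecidableEq ι] [DecidableEq κ]
    {M : Matrix ι ι K} {N : Matrix κ κ K} {X : Matrix ι κ K} (h : M * X = X * N)
    (hdisj : Disjoint (spectrum K M) (spectrum K N)) : X = 0 := by
  apply toLin'.injective
  rw [map_zero]
  refine eq_zero_of_comp_eq_comp (f := toLin' N) (g := toLin' M) ?_ fun μ hN hM ↦ ?_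
  · rw [← toLin'_mul, ← toLin'_mul, h]
  · rw [Module.End.hasEigenvalue_iff_mem_spectrum, spectrum_toLin'] at hM hN
    exact Set.disjoint_left.mp hdisj hM hN

theorem exists_mul_eq_mul_of_invariant {M : Matrix ι ι K} {W : Submodule K (ι → K)}
    (hW : ∀ v ∈ W, M *ᵥ v ∈ W) :
    ∃ (k : ℕ) (S : Matrix ι (Fin k) K) (N : Matrix (Fin k) (Fin k) K),
      M * S = S * N ∧ Function.Injective S.mulVec ∧ S.mulVecLin.range = W := by
  let b := Module.finBasis K W
  let φ := b.equivFun.symm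
  let f : Module.End K W := M.mulVecLin.restrict hW
  let S := LinearMap.toMatrix' (W.subtype ∘ₗ φ.toLinearMap)
  have hS : S.mulVecLin = W.subtype ∘ₗ φ.toLinearMap := toLin'_toMatrix' _
  have hSφ (a) : S *ᵥ a = (φ a : ι → K) := LinearMap.congr_fun hS a
  have hfφ (a) : φ (LinearMap.toMatrix b b f *ᵥ a) = f (φ a) := by
    rw [LinearEquiv.symm_apply_eq, b.equivFun_apply,
      ← LinearMap.toMatrix_mulVec_repr b b f, ← b.equivFun_apply, b.equivFun.apply_symm_apply]
  refine ⟨_, S, LinearMap.toMatrix b b f, ?_, ?_, ?_⟩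
  · refine ext_of_mulVec_single fun j ↦ ?_
    rw [← mulVec_mulVec, ← mulVec_mulVec, hSφ, hSφ, hfφ]
    rfl
  · rw [show S.mulVec = Subtype.val ∘ φ from funext hSφ]
    exact Subtype.val_injective.comp φ.injective
  · rw [hS, LinearMap.range_comp, LinearEquiv.range, Submodule.map_top, Submodule.range_subtype]

theorem exists_mul_eq_mul_range_eq_spectralSubspace [DecidableEq ι] (M : Matrix ι ι K)
    (s : Set K) :
    ∃ (k : ℕ) (S : Matrix ι (Fin k) K) (N : Matrix (Fin k) (Fin k) K),
      M * S = S * N ∧ Function.Injective S.mulVec ∧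
        S.mulVecLin.range = spectralSubspace (toLin' M) s ∧ spectrum K N ⊆ s := by
  obtain ⟨k, S, N, hMS, hinj, hrange⟩ := exists_mul_eq_mul_of_invariant (M := M)
    (mapsTo_spectralSubspace (toLin' M) s)
  refine ⟨k, S, N, hMS, hinj, hrange, fun μ hμ ↦ ?_⟩
  obtain ⟨a, ha, hNa⟩ := mem_spectrum_iff_exists_mulVec_eq_smul.mp hμ
  have hSa : S *ᵥ a ∈ spectralSubspace (toLin' M) s := hrange ▸ ⟨a, rfl⟩
  have hMSa : M *ᵥ (S *ᵥ a) = μ • (S *ᵥ a) := by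
    rw [mulVec_mulVec, hMS, ← mulVec_mulVec, hNa, mulVec_smul]
  have hSa_ne : S *ᵥ a ≠ 0 := fun h ↦ ha (hinj (by simp [h]))
  exact mem_of_hasEigenvector_of_mem_spectralSubspace
    ⟨Module.End.mem_eigenspace_iff.mpr (by rwa [toLin'_apply]), hSa_ne⟩ hSa

end IntertwiningMatrices

section Lyapunov

theorem tendsto_pow_nhds_zero_of_spectralRadius_lt_one {𝔸 : Type*} [NormedRing 𝔸]
    [NormedAlgebra ℂ 𝔸] [CompleteSpace 𝔸] {a : 𝔸} (ha : spectralRadius ℂ a < 1) :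
    Filter.Tendsto (a ^ ·) Filter.atTop (nhds 0) := by
  obtain ⟨r, har, hr⟩ := ENNReal.lt_iff_exists_nnreal_btwn.mp ha
  have hr_one : (r : ℝ) < 1 := mod_cast hr
  have hgelfand :=
    (spectrum.pow_nnnorm_pow_one_div_tendsto_nhds_spectralRadius a).eventually_lt_const har
  refine squeeze_zero_norm' ?_ (tendsto_pow_atTop_nhds_zero_of_lt_one r.2 hr_one)
  filter_upwards [hgelfand, Filter.eventually_gt_atTop 0] with k hk hk_pos
  have hpow : (‖a ^ k‖₊ : ENNReal) ≤ (r : ENNReal) ^ k := by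
    rw [← ENNReal.rpow_natCast, ← ENNReal.rpow_inv_le_iff (mod_cast hk_pos), ← one_div]
    exact hk.le
  exact_mod_cast hpow

variable {ι κ : Type*} [Fintype ι] [DecidableEq ι] [Fintype κ] [DecidableEq κ]

open scoped MatrixOrder Matrix.Norms.L2Operator in
theorem posSemidef_of_stein {E T : Matrix ι ι ℂ} (hT : ∀ z ∈ spectrum ℂ T, ‖z‖ < 1)
    (h : (E - Tᴴ * E * T).PosSemidef) : E.PosSemidef := by
  cases isEmpty_or_nonempty ι
  · rw [Subsingleton.elim E 0]
    exact .zero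
  have hpow (k : ℕ) : (T ^ k)ᴴ * E * T ^ k ≤ E := by
    induction k with
    | zero => simp
    | succ k ih =>
      calc (T ^ (k + 1))ᴴ * E * T ^ (k + 1)
          = (T ^ k)ᴴ * (Tᴴ * E * T) * T ^ k := by
            simp only [pow_succ', conjTranspose_mul, Matrix.mul_assoc]
        _ ≤ (T ^ k)ᴴ * E * T ^ k := star_left_conjugate_le_conjugate h _
        _ ≤ E := ih
  have hradius : spectralRadius ℂ T < 1 :=
    spectrum.spectralRadius_lt_of_forall_lt (r := 1) T fun z hz ↦ hT z hz
  have hlim : Filter.Tendsto (fun k : ℕ ↦ (T ^ k)ᴴ * E * T ^ k) Filter.atTop (nhds 0) := by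
    have hTk := tendsto_pow_nhds_zero_of_spectralRadius_lt_one hradius
    simpa [star_eq_conjTranspose] using (hTk.star.mul_const E).mul hTk
  have hE : 0 ≤ E := le_of_tendsto' hlim hpow
  exact hE.posSemidef

/-- A Hurwitz (stable) matrix: every eigenvalue has negative real part. -/
def IsHurwitz (M : Matrix ι ι ℂ) : Prop :=
  ∀ z ∈ spectrum ℂ M, z.re < 0

theorem isHurwitz_iff_forall_mulVec {M : Matrix ι ι ℂ} :
    IsHurwitz M ↔ ∀ (z : ℂ) (v : ι → ℂ), v ≠ 0 → M *ᵥ v = z • v → z.re < 0 := by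
  simp only [IsHurwitz, mem_spectrum_iff_exists_mulVec_eq_smul]
  exact ⟨fun h z v hv hz ↦ h z ⟨v, hv, hz⟩, fun h z ⟨v, hv, hz⟩ ↦ h z v hv hz⟩

theorem IsHurwitz.eq_zero_of_lyapunov {M : Matrix ι ι ℂ} {N : Matrix κ κ ℂ} {X : Matrix ι κ ℂ}
    (hM : IsHurwitz M) (hN : IsHurwitz N) (h : Mᴴ * X + X * N = 0) : X = 0 := by
  refine sylvester_eq_zero (M := Mᴴ) (N := -N) ?_ (Set.disjoint_left.mpr fun z hzM hzN ↦ ?_)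
  · rw [Matrix.mul_neg, eq_neg_iff_add_eq_zero, h]
  · rw [← star_eq_conjTranspose, spectrum.map_star] at hzM
    rw [← spectrum.neg_eq] at hzN
    have hM_re := hM _ hzM
    have hN_re := hN _ hzN
    simp only [Complex.star_def, Complex.conj_re, Complex.neg_re] at hM_re hN_re
    linarith

theorem norm_one_add_lt_norm_one_sub {μ : ℂ} (hμ : μ.re < 0) : ‖1 + μ‖ < ‖1 - μ‖ := by
  rw [← sq_lt_sq₀ (norm_nonneg _) (norm_nonneg _), Complex.sq_norm, Complex.sq_norm,
    Complex.normSq_apply, Complex.normSq_apply]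
  simp only [Complex.add_re, Complex.sub_re, Complex.one_re, Complex.add_im, Complex.sub_im,
    Complex.one_im]
  linarith

theorem IsHurwitz.isUnit_one_sub {F : Matrix ι ι ℂ} (hF : IsHurwitz F) : IsUnit (1 - F) := by
  have h : (1 : ℂ) ∉ spectrum ℂ F := fun h ↦ (zero_lt_one.trans (hF 1 h)).false
  simpa [spectrum.mem_iff] using h

/-- The Cayley transform `(1 + F) (1 - F)⁻¹`, written as `2 (1 - F)⁻¹ - 1`; it is meaningful only
when `1 - F` is invertible. It maps Hurwitz matrices to matrices with spectrum in the open unit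
disc. -/
noncomputable def cayley (F : Matrix ι ι ℂ) : Matrix ι ι ℂ :=
  2 • (1 - F)⁻¹ - 1

theorem IsHurwitz.norm_lt_one_of_mem_spectrum_cayley {F : Matrix ι ι ℂ} (hF : IsHurwitz F)
    {z : ℂ} (hz : z ∈ spectrum ℂ (cayley F)) : ‖z‖ < 1 := by
  have hinv : (1 - F) * (1 - F)⁻¹ = 1 :=
    mul_nonsing_inv _ ((isUnit_iff_isUnit_det _).mp hF.isUnit_one_sub)
  have hcayley : (1 - F) * cayley F = 1 + F := by
    rw [cayley, Matrix.mul_sub, mul_smul_comm, hinv]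
    noncomm_ring
  obtain ⟨v, hv, hTv⟩ := mem_spectrum_iff_exists_mulVec_eq_smul.mp hz
  have hFv : v + F *ᵥ v = z • (v - F *ᵥ v) := by
    calc v + F *ᵥ v = (1 - F) *ᵥ (cayley F *ᵥ v) := by
          rw [mulVec_mulVec, hcayley, add_mulVec, one_mulVec]
      _ = z • (v - F *ᵥ v) := by rw [hTv, mulVec_smul, sub_mulVec, one_mulVec]
  have hFv' : (z + 1) • F *ᵥ v = (z - 1) • v := by
    linear_combination (norm := module) hFv
  have hz_add : z + 1 ≠ 0 := by
    intro h
    have hz_sub : z - 1 ≠ 0 := by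
      rw [eq_neg_of_add_eq_zero_left h]
      norm_num
    exact smul_ne_zero hz_sub hv (by rw [← hFv', h, zero_smul])
  have hμ : F *ᵥ v = ((z - 1) / (z + 1)) • v := by
    rw [div_eq_inv_mul, mul_smul, ← hFv', inv_smul_smul₀ hz_add]
  have hlt := norm_one_add_lt_norm_one_sub (isHurwitz_iff_forall_mulVec.mp hF _ v hv hμ)
  have hz_eq : 1 + (z - 1) / (z + 1) = z * (1 - (z - 1) / (z + 1)) := by
    field_simp
    ring
  rw [hz_eq, norm_mul] at hlt
  exact lt_of_mul_lt_mul_right (by simpa using hlt) (norm_nonneg (1 - (z - 1) / (z + 1)))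

theorem IsHurwitz.sub_cayley_eq {E F Q : Matrix ι ι ℂ} (hF : IsHurwitz F)
    (h : Fᴴ * E + E * F + Q = 0) :
    E - (cayley F)ᴴ * E * cayley F = 2 • ((1 - F)⁻¹ᴴ * Q * (1 - F)⁻¹) := by
  have hinv : (1 - F) * (1 - F)⁻¹ = 1 :=
    mul_nonsing_inv _ ((isUnit_iff_isUnit_det _).mp hF.isUnit_one_sub)
  have hQ : Q = (1 - F)ᴴ * E + E * (1 - F) - 2 • E := by
    rw [eq_neg_of_add_eq_zero_right h, conjTranspose_sub, conjTranspose_one]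
    noncomm_ring
  rw [cayley, hQ]
  generalize 1 - F = P at hinv
  have hinv' : P⁻¹ᴴ * Pᴴ = 1 := by rw [← conjTranspose_mul, hinv, conjTranspose_one]
  calc E - (2 • P⁻¹ - 1)ᴴ * E * (2 • P⁻¹ - 1)
      = 2 • (P⁻¹ᴴ * Pᴴ * E * P⁻¹ + P⁻¹ᴴ * E * (P * P⁻¹) - 2 • (P⁻¹ᴴ * E * P⁻¹)) := by
        simp only [conjTranspose_sub, conjTranspose_smul, conjTranspose_one, star_trivial,
          hinv, hinv']
        noncomm_ring
    _ = 2 • (P⁻¹ᴴ * (Pᴴ * E + E * P - 2 • E) * P⁻¹) := by noncomm_ring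

theorem IsHurwitz.posSemidef_of_lyapunov {E F Q : Matrix ι ι ℂ} (hF : IsHurwitz F)
    (hQ : Q.PosSemidef) (h : Fᴴ * E + E * F + Q = 0) : E.PosSemidef := by
  refine posSemidef_of_stein (T := cayley F) (fun z ↦ hF.norm_lt_one_of_mem_spectrum_cayley) ?_
  rw [hF.sub_cayley_eq h]
  exact (hQ.conjTranspose_mul_mul_same _).smul (by norm_num)

end Lyapunov

section Lagrangian

variable {ι κ κ' : Type*} [Fintype ι] [Fintype κ] [Fintype κ']

/-- The range of `S` is Lagrangian for the sesquilinear form `(u, v) ↦ uᴴ J v`: it is isotropic and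
contains every vector that is `J`-orthogonal to it. -/
def IsLagrangian (J : Matrix ι ι ℂ) (S : Matrix ι κ ℂ) : Prop :=
  Sᴴ * J * S = 0 ∧ ∀ v, Sᴴ *ᵥ (J *ᵥ v) = 0 → v ∈ S.mulVecLin.range

theorem IsHurwitz.conjTranspose_mul_mul_eq_zero [DecidableEq κ] {J H : Matrix ι ι ℂ}
    {S : Matrix ι κ ℂ} {N : Matrix κ κ ℂ} (hN : IsHurwitz N) (hJ : J * H = -Hᴴ * J)
    (h : H * S = S * N) : Sᴴ * J * S = 0 := by
  refine hN.eq_zero_of_lyapunov hN ?_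
  calc Nᴴ * (Sᴴ * J * S) + Sᴴ * J * S * N
      = (S * N)ᴴ * J * S + Sᴴ * J * (S * N) := by
        simp only [conjTranspose_mul, Matrix.mul_assoc]
    _ = Sᴴ * (Hᴴ * J + J * H) * S := by
        simp only [← h, conjTranspose_mul, Matrix.mul_assoc, Matrix.mul_add, Matrix.add_mul]
    _ = 0 := by simp [hJ]

theorem isLagrangian_of_sup_eq_top {J : Matrix ι ι ℂ} {S : Matrix ι κ ℂ} {S' : Matrix ι κ' ℂ}
    (hJ : Function.Injective J.mulVec) (hS : Sᴴ * J * S = 0) (hS' : S'ᴴ * J * S' = 0)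
    (htop : S.mulVecLin.range ⊔ S'.mulVecLin.range = ⊤) : IsLagrangian J S := by
  refine ⟨hS, fun v hv ↦ ?_⟩
  have hdecomp (u : ι → ℂ) : ∃ a b, S *ᵥ a + S' *ᵥ b = u := by
    obtain ⟨_, ⟨a, rfl⟩, _, ⟨b, rfl⟩, h⟩ :=
      Submodule.mem_sup.mp (htop ▸ Submodule.mem_top (x := u))
    exact ⟨a, b, h⟩
  obtain ⟨a, b, rfl⟩ := hdecomp v
  set w := J *ᵥ (S' *ᵥ b) with hw
  have hSw : star w ᵥ* S = 0 := by
    rw [← conjTranspose_conjTranspose S, ← star_mulVec, star_eq_zero]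
    simpa [hw, mulVec_add, mulVec_mulVec, ← Matrix.mul_assoc, hS] using hv
  have hSw' : star w ᵥ* S' = 0 := by
    rw [← conjTranspose_conjTranspose S', ← star_mulVec, star_eq_zero]
    simp [hw, mulVec_mulVec, ← Matrix.mul_assoc, hS']
  have hw_zero : w = 0 := by
    obtain ⟨c, d, hcd⟩ := hdecomp w
    refine dotProduct_star_self_eq_zero.mp ?_
    nth_rw 2 [← hcd]
    simp [dotProduct_add, dotProduct_mulVec, hSw, hSw']
  have hb : S' *ᵥ b = 0 := hJ (hw_zero.trans (mulVec_zero J).symm)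
  exact ⟨a, by simp [hb]⟩

theorem exists_isHurwitz_isLagrangian [DecidableEq ι] {J H : Matrix ι ι ℂ}
    (hJ : Function.Injective J.mulVec) (hJH : J * H = -Hᴴ * J)
    (hH : ∀ z ∈ spectrum ℂ H, z.re ≠ 0) :
    ∃ (k : ℕ) (S : Matrix ι (Fin k) ℂ) (N : Matrix (Fin k) (Fin k) ℂ),
      H * S = S * N ∧ Function.Injective S.mulVec ∧ IsHurwitz N ∧ IsLagrangian J S := by
  obtain ⟨k, S, N, hHS, hS, hrange, hN⟩ :=
    exists_mul_eq_mul_range_eq_spectralSubspace H {z | z.re < 0}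
  obtain ⟨k', S', N', hHS', hS', hrange', hN'⟩ :=
    exists_mul_eq_mul_range_eq_spectralSubspace H {z | z.re < 0}ᶜ
  have hN'_neg : IsHurwitz (-N') := by
    intro z hz
    rw [← spectrum.neg_eq, Set.mem_neg] at hz
    have hre : ¬ (-z).re < 0 := hN' hz
    have hre_ne : (-z).re ≠ 0 := hH _ (spectrum_subset_of_mul_eq_mul hS' hHS' hz)
    rw [Complex.neg_re] at hre hre_ne
    grind
  have hiso : Sᴴ * J * S = 0 := IsHurwitz.conjTranspose_mul_mul_eq_zero hN hJH hHS
  have hiso' : S'ᴴ * J * S' = 0 :=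
    hN'_neg.conjTranspose_mul_mul_eq_zero (H := -H) (by simp [hJH]) (by simp [hHS'])
  have htop : S.mulVecLin.range ⊔ S'.mulVecLin.range = ⊤ := by
    rw [hrange, hrange', spectralSubspace_sup_compl]
  exact ⟨k, S, N, hHS, hS, hN, isLagrangian_of_sup_eq_top hJ hiso hiso' htop⟩

end Lagrangian

section Riccati

variable {n p : Type*} [Fintype n]

/-- The Popov–Belevitch–Hautus test at `lam`: no eigenvector of `A` for `lam` lies in the kernel
of `C`. Over `ℂ`, detectability of `(C, A)` is this condition for all `lam` with nonnegative real
part, and stabilizability of `(A, B)` is detectability of `(Bᴴ, Aᴴ)`. -/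
def IsObservableAt {R : Type*} [Semiring R] (A : Matrix n n R) (C : Matrix p n R) (lam : R) :
    Prop :=
  ∀ x : n → R, A *ᵥ x = lam • x → C *ᵥ x = 0 → x = 0

/-- The Hamiltonian matrix of the Riccati equation `Aᴴ E + E A - E G E + K = 0`: a matrix `E`
solves the equation exactly when the graph `{(x, E x)}` is invariant under it. -/
def riccatiHamiltonian {R : Type*} [Ring R] [StarRing R] (A G K : Matrix n n R) :
    Matrix (n ⊕ n) (n ⊕ n) R :=
  fromBlocks A (-G) (-K) (-Aᴴ)

theorem J_mul_riccatiHamiltonian {R : Type*} [CommRing R] [StarRing R] [DecidableEq n]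
    {G K : Matrix n n R} (A : Matrix n n R) (hG : G.IsHermitian) (hK : K.IsHermitian) :
    J n R * riccatiHamiltonian A G K = -(riccatiHamiltonian A G K)ᴴ * J n R := by
  simp [J, riccatiHamiltonian, fromBlocks_multiply, fromBlocks_conjTranspose, hG.eq, hK.eq,
    fromBlocks_neg]

theorem re_ne_zero_of_mem_spectrum_riccatiHamiltonian [DecidableEq n] {A G K : Matrix n n ℂ}
    (hG : G.PosSemidef) (hK : K.PosSemidef)
    (hAG : ∀ lam : ℂ, lam.re = 0 → IsObservableAt Aᴴ G lam)
    (hAK : ∀ lam : ℂ, lam.re = 0 → IsObservableAt A K lam) {z : ℂ}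
    (hz : z ∈ spectrum ℂ (riccatiHamiltonian A G K)) : z.re ≠ 0 := by
  intro hre
  obtain ⟨v, hv, hHv⟩ := mem_spectrum_iff_exists_mulVec_eq_smul.mp hz
  obtain ⟨x, y, rfl⟩ : ∃ x y, Sum.elim x y = v := ⟨_, _, Sum.elim_comp_inl_inr v⟩
  have hz_star : star z = -z := Complex.ext (by simp [hre]) (by simp)
  have hx : A *ᵥ x - G *ᵥ y = z • x := by
    funext i
    simpa [riccatiHamiltonian, fromBlocks_mulVec, sub_eq_add_neg, neg_mulVec] using
      congrFun hHv (Sum.inl i)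
  have hy : -(K *ᵥ x) - Aᴴ *ᵥ y = z • y := by
    funext i
    simpa [riccatiHamiltonian, fromBlocks_mulVec, sub_eq_add_neg, neg_mulVec] using
      congrFun hHv (Sum.inr i)
  -- Pairing the first equation with `y` and the second with `x`, the terms in `z` cancel.
  have hsum : star x ⬝ᵥ K *ᵥ x + star y ⬝ᵥ G *ᵥ y = 0 := by
    have hyx : star y ⬝ᵥ A *ᵥ x - star y ⬝ᵥ G *ᵥ y = z * (star y ⬝ᵥ x) := by
      rw [← dotProduct_sub, hx, dotProduct_smul, smul_eq_mul]
    have hxy : -(star x ⬝ᵥ K *ᵥ x) - star y ⬝ᵥ A *ᵥ x = -z * (star y ⬝ᵥ x) := by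
      calc -(star x ⬝ᵥ K *ᵥ x) - star y ⬝ᵥ A *ᵥ x
          = star (-(K *ᵥ x) - Aᴴ *ᵥ y) ⬝ᵥ x := by
            simp [star_mulVec, hK.isHermitian.eq, sub_dotProduct, dotProduct_mulVec]
        _ = -z * (star y ⬝ᵥ x) := by
            rw [hy, star_smul, hz_star, smul_dotProduct, smul_eq_mul]
    linear_combination -hyx - hxy
  obtain ⟨hxK, hyG⟩ := (add_eq_zero_iff_of_nonneg (hK.dotProduct_mulVec_nonneg x)
    (hG.dotProduct_mulVec_nonneg y)).mp hsum
  have hKx : K *ᵥ x = 0 := (hK.dotProduct_mulVec_zero_iff x).mp hxK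
  have hGy : G *ᵥ y = 0 := (hG.dotProduct_mulVec_zero_iff y).mp hyG
  have hx_zero : x = 0 := hAK z hre x (by simpa [hGy] using hx) hKx
  have hy_zero : y = 0 := hAG (-z) (by simp [hre]) y
    (by simpa [hKx, neg_eq_iff_eq_neg] using hy) hGy
  exact hv (by simp [hx_zero, hy_zero])

theorem mulVec_injective_of_isHurwitz {κ : Type*} [Fintype κ] [DecidableEq κ]
    {A G K : Matrix n n ℂ} {X Y : Matrix n κ ℂ} {N : Matrix κ κ ℂ} (hG : G.PosSemidef)
    (hstab : ∀ lam : ℂ, 0 ≤ lam.re → IsObservableAt Aᴴ G lam) (hN : IsHurwitz N)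
    (hXN : A * X - G * Y = X * N) (hYN : -(K * X) - Aᴴ * Y = Y * N)
    (hsymm : Xᴴ * Y = Yᴴ * X) (hinj : ∀ a, X *ᵥ a = 0 → Y *ᵥ a = 0 → a = 0) :
    Function.Injective X.mulVec := by
  have hXNa (a) : A *ᵥ (X *ᵥ a) - G *ᵥ (Y *ᵥ a) = X *ᵥ (N *ᵥ a) := by
    simpa [sub_mulVec] using congrArg (· *ᵥ a) hXN
  have hYNa (a) : -(K *ᵥ (X *ᵥ a)) - Aᴴ *ᵥ (Y *ᵥ a) = Y *ᵥ (N *ᵥ a) := by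
    simpa [sub_mulVec, neg_mulVec] using congrArg (· *ᵥ a) hYN
  have hGY {a} (ha : X *ᵥ a = 0) : G *ᵥ (Y *ᵥ a) = 0 := by
    refine (hG.dotProduct_mulVec_zero_iff _).mp ?_
    have hG_eq : G *ᵥ (Y *ᵥ a) = -(X *ᵥ (N *ᵥ a)) := by simpa [ha] using congrArg (-·) (hXNa a)
    calc star (Y *ᵥ a) ⬝ᵥ G *ᵥ (Y *ᵥ a)
        = -(star a ⬝ᵥ (Yᴴ * X) *ᵥ (N *ᵥ a)) := by
          simp [hG_eq, star_mulVec, dotProduct_mulVec, vecMul_vecMul, Matrix.mul_assoc]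
      _ = -(star (X *ᵥ a) ⬝ᵥ Y *ᵥ (N *ᵥ a)) := by
          simp [← hsymm, star_mulVec, dotProduct_mulVec, vecMul_vecMul, Matrix.mul_assoc]
      _ = 0 := by simp [ha]
  have hker_invariant : ∀ a ∈ X.mulVecLin.ker, N *ᵥ a ∈ X.mulVecLin.ker := by
    intro a (ha : X *ᵥ a = 0)
    simpa [ha, hGY ha] using (hXNa a).symm
  suffices X.mulVecLin.ker = ⊥ from LinearMap.ker_eq_bot.mp this
  by_contra hne
  obtain ⟨a, hXa, ha, μ, hNa⟩ := exists_mem_mulVec_eq_smul hker_invariant hne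
  replace hXa : X *ᵥ a = 0 := hXa
  have hμ : μ.re < 0 := isHurwitz_iff_forall_mulVec.mp hN μ a ha hNa
  have hAY : Aᴴ *ᵥ (Y *ᵥ a) = -μ • (Y *ᵥ a) := by
    simpa [hXa, hNa, mulVec_smul, neg_eq_iff_eq_neg] using hYNa a
  exact ha (hinj a hXa (hstab (-μ) (by simpa using hμ.le) _ hAY (hGY hXa)))

theorem exists_isHurwitz_isLagrangian_riccatiHamiltonian {A G K : Matrix n n ℂ}
    (hG : G.PosSemidef) (hK : K.PosSemidef)
    (hAG : ∀ lam : ℂ, lam.re = 0 → IsObservableAt Aᴴ G lam)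
    (hAK : ∀ lam : ℂ, lam.re = 0 → IsObservableAt A K lam) :
    ∃ (k : ℕ) (X Y : Matrix n (Fin k) ℂ) (N : Matrix (Fin k) (Fin k) ℂ),
      A * X - G * Y = X * N ∧ -(K * X) - Aᴴ * Y = Y * N ∧ IsHurwitz N ∧ Xᴴ * Y = Yᴴ * X ∧
        (∀ a, X *ᵥ a = 0 → Y *ᵥ a = 0 → a = 0) ∧
        ∀ y, Xᴴ *ᵥ y = 0 → ∃ a, X *ᵥ a = 0 ∧ Y *ᵥ a = y := by
  classical
  have hJ : Function.Injective (J n ℂ).mulVec :=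
    mulVec_injective_iff_isUnit.mpr ((isUnit_iff_isUnit_det _).mpr (isUnit_det_J n ℂ))
  obtain ⟨k, S, N, hHS, hS, hN, hiso, hmax⟩ :=
    exists_isHurwitz_isLagrangian hJ
      (J_mul_riccatiHamiltonian A hG.isHermitian hK.isHermitian)
      fun _ ↦ re_ne_zero_of_mem_spectrum_riccatiHamiltonian hG hK hAG hAK
  obtain ⟨X, Y, rfl⟩ : ∃ X Y, S = fromRows X Y := ⟨_, _, (fromRows_toRows S).symm⟩
  rw [riccatiHamiltonian, fromBlocks_mul_fromRows, fromRows_mul, fromRows_ext_iff] at hHS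
  have hSJ : (fromRows X Y)ᴴ * J n ℂ = fromCols Yᴴ (-Xᴴ) := by
    simp [J, conjTranspose_fromRows_eq_fromCols_conjTranspose, fromCols_mul_fromBlocks]
  rw [hSJ, fromCols_mul_fromRows, Matrix.neg_mul, ← sub_eq_add_neg, sub_eq_zero] at hiso
  simp only [mulVec_mulVec, hSJ] at hmax
  refine ⟨k, X, Y, N, by simpa [sub_eq_add_neg] using hHS.1,
    by simpa [sub_eq_add_neg] using hHS.2, hN, hiso.symm, fun a hXa hYa ↦ ?_, fun y hy ↦ ?_⟩
  · refine hS ?_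
    simp [fromRows_mulVec, hXa, hYa]
  · obtain ⟨a, ha⟩ := hmax (Sum.elim 0 y) (by simp [hy, neg_mulVec])
    rw [mulVecLin_apply, fromRows_mulVec, Sum.elim_eq_iff] at ha
    exact ⟨a, ha⟩

theorem closedLoop_eq_of_mul_eq_mul {𝕜 κ : Type*} [Ring 𝕜] [Fintype κ] [DecidableEq n]
    {A G E : Matrix n n 𝕜} {X : Matrix n κ 𝕜} {N : Matrix κ κ 𝕜} {R : Matrix κ n 𝕜}
    (hXR : X * R = 1) (hXN : A * X - G * (E * X) = X * N) : A - G * E = X * N * R := by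
  simp [← hXN, Matrix.sub_mul, Matrix.mul_assoc, hXR]

theorem riccati_of_mul_eq_mul {𝕜 κ : Type*} [Ring 𝕜] [StarRing 𝕜] [Fintype κ] [DecidableEq n]
    {A G K E : Matrix n n 𝕜} {X : Matrix n κ 𝕜} {N : Matrix κ κ 𝕜} {R : Matrix κ n 𝕜}
    (hXR : X * R = 1)
    (hXN : A * X - G * (E * X) = X * N) (hYN : -(K * X) - Aᴴ * (E * X) = E * X * N) :
    Aᴴ * E + E * A - E * G * E + K = 0 := by
  have hgraph : -K - Aᴴ * E = E * (A - G * E) := by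
    calc -K - Aᴴ * E = (-(K * X) - Aᴴ * (E * X)) * R := by
          simp [Matrix.sub_mul, Matrix.mul_assoc, hXR]
      _ = E * (A - G * E) := by
          simp only [hYN, closedLoop_eq_of_mul_eq_mul hXR hXN, Matrix.mul_assoc]
  calc Aᴴ * E + E * A - E * G * E + K = E * (A - G * E) - (-K - Aᴴ * E) := by noncomm_ring
    _ = 0 := sub_eq_zero.mpr hgraph.symm

theorem isHermitian_of_conjTranspose_mul_mul_eq {𝕜 κ : Type*} [Ring 𝕜] [StarRing 𝕜] [Fintype κ]
    [DecidableEq n] {E : Matrix n n 𝕜} {X : Matrix n κ 𝕜} {R : Matrix κ n 𝕜} (hXR : X * R = 1)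
    (h : Xᴴ * (E * X) = (E * X)ᴴ * X) : E.IsHermitian := by
  have hXR' : Rᴴ * Xᴴ = 1 := by rw [← conjTranspose_mul, hXR, conjTranspose_one]
  calc Eᴴ = (Rᴴ * Xᴴ) * Eᴴ * (X * R) := by rw [hXR, hXR', Matrix.one_mul, Matrix.mul_one]
    _ = Rᴴ * ((E * X)ᴴ * X) * R := by simp only [conjTranspose_mul, Matrix.mul_assoc]
    _ = Rᴴ * (Xᴴ * (E * X)) * R := by rw [h]
    _ = (Rᴴ * Xᴴ) * E * (X * R) := by simp only [Matrix.mul_assoc]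
    _ = E := by rw [hXR, hXR', Matrix.one_mul, Matrix.mul_one]

theorem IsHurwitz.posSemidef_of_riccati [DecidableEq n] {A G K E : Matrix n n ℂ}
    (hst : IsHurwitz (A - G * E)) (hG : G.PosSemidef) (hK : K.PosSemidef) (hE : E.IsHermitian)
    (hric : Aᴴ * E + E * A - E * G * E + K = 0) : E.PosSemidef := by
  have hEGE : (E * G * E).PosSemidef := by simpa [hE.eq] using hG.conjTranspose_mul_mul_same E
  refine hst.posSemidef_of_lyapunov (hEGE.add hK) ?_
  rw [conjTranspose_sub, conjTranspose_mul, hG.isHermitian.eq, hE.eq, ← hric]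
  noncomm_ring

theorem exists_posSemidef_riccati_isHurwitz [DecidableEq n] {A G K : Matrix n n ℂ}
    (hG : G.PosSemidef) (hK : K.PosSemidef)
    (hAG : ∀ lam : ℂ, 0 ≤ lam.re → IsObservableAt Aᴴ G lam)
    (hAK : ∀ lam : ℂ, lam.re = 0 → IsObservableAt A K lam) :
    ∃ E : Matrix n n ℂ, E.PosSemidef ∧ Aᴴ * E + E * A - E * G * E + K = 0 ∧
      IsHurwitz (A - G * E) := by
  obtain ⟨k, X, Y, N, hXN, hYN, hN, hsymm, hinj, hmax⟩ :=
    exists_isHurwitz_isLagrangian_riccatiHamiltonian hG hK (fun lam h ↦ hAG lam h.ge) hAK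
  have hX : Function.Injective X.mulVec :=
    mulVec_injective_of_isHurwitz hG hAG hN hXN hYN hsymm hinj
  have hX' : Function.Injective Xᴴ.mulVec := by
    refine (injective_iff_map_eq_zero Xᴴ.mulVecLin).mpr fun y hy ↦ ?_
    obtain ⟨a, hXa, rfl⟩ := hmax y hy
    rw [hX (hXa.trans (mulVec_zero X).symm), mulVec_zero]
  obtain ⟨R, hXR, hRX⟩ := exists_mul_eq_one_and_mul_eq_one hX hX'
  have hEX : Y * R * X = Y := by rw [Matrix.mul_assoc, hRX, Matrix.mul_one]
  generalize Y * R = E at hEX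
  subst hEX
  have hst : IsHurwitz (A - G * E) := by
    have hR : Function.Injective R.mulVec :=
      Function.LeftInverse.injective (g := X.mulVec) fun y ↦ by simp [mulVec_mulVec, hXR]
    have hNR : N * R = R * (A - G * E) := by
      rw [closedLoop_eq_of_mul_eq_mul hXR hXN, ← Matrix.mul_assoc, ← Matrix.mul_assoc, hRX,
        Matrix.one_mul]
    exact fun z hz ↦ hN z (spectrum_subset_of_mul_eq_mul hR hNR hz)
  have hric : Aᴴ * E + E * A - E * G * E + K = 0 := riccati_of_mul_eq_mul hXR hXN hYN
  have hE : E.IsHermitian := isHermitian_of_conjTranspose_mul_mul_eq hXR hsymm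
  exact ⟨E, hst.posSemidef_of_riccati hG hK hE hric, hric, hst⟩

theorem eq_of_riccati_of_isHurwitz [DecidableEq n] {A G K E E' : Matrix n n ℂ}
    (hG : G.IsHermitian) (hE : E.IsHermitian)
    (hric : Aᴴ * E + E * A - E * G * E + K = 0) (hst : IsHurwitz (A - G * E))
    (hric' : Aᴴ * E' + E' * A - E' * G * E' + K = 0) (hst' : IsHurwitz (A - G * E')) :
    E' = E := by
  refine sub_eq_zero.mp (hst.eq_zero_of_lyapunov hst' ?_)
  calc (A - G * E)ᴴ * (E' - E) + (E' - E) * (A - G * E')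
      = (Aᴴ * E' + E' * A - E' * G * E' + K) - (Aᴴ * E + E * A - E * G * E + K) := by
        rw [conjTranspose_sub, conjTranspose_mul, hG.eq, hE.eq]
        noncomm_ring
    _ = 0 := by rw [hric, hric', sub_zero]

end Riccati

theorem riccati_unique_stabilizing_possemidef_solution_general {n : Type*} [Fintype n]
    [DecidableEq n] {A G K : Matrix n n ℂ} (hG : G.PosSemidef) (hK : K.PosSemidef)
    (hstab : ∀ lam : ℂ, 0 ≤ lam.re → IsObservableAt Aᴴ G lam)
    (hobs : ∀ lam : ℂ, lam.re = 0 → IsObservableAt A K lam) :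
    ∃ E : Matrix n n ℂ, E.PosSemidef ∧ Aᴴ * E + E * A - E * G * E + K = 0 ∧
      IsHurwitz (A - G * E) ∧
      ∀ E' : Matrix n n ℂ, Aᴴ * E' + E' * A - E' * G * E' + K = 0 →
        IsHurwitz (A - G * E') → E' = E := by
  obtain ⟨E, hE, hric, hst⟩ := exists_posSemidef_riccati_isHurwitz hG hK hstab hobs
  exact ⟨E, hE, hric, hst, fun _ hric' hst' ↦
    eq_of_riccati_of_isHurwitz hG.isHermitian hE.isHermitian hric hst hric' hst'⟩

theorem riccati_unique_stabilizing_possemidef_solution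
    {n m p : Type*} [Fintype n] [DecidableEq n] [Fintype m] [Fintype p]
    (A : Matrix n n ℂ) (B : Matrix n m ℂ) (C : Matrix p n ℂ)
    (hstab : ∀ lam : ℂ, 0 ≤ lam.re → ∀ y : n → ℂ,
      Aᴴ *ᵥ y = lam • y → Bᴴ *ᵥ y = 0 → y = 0)
    (hdet : ∀ lam : ℂ, 0 ≤ lam.re → ∀ x : n → ℂ,
      A *ᵥ x = lam • x → C *ᵥ x = 0 → x = 0) :
    ∃! E : Matrix n n ℂ, E.PosSemidef ∧
      Aᴴ * E + E * A - E * (B * Bᴴ) * E + Cᴴ * C = 0 ∧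
      ∀ lam ∈ spectrum ℂ (A - (B * Bᴴ) * E), lam.re < 0 := by
  obtain ⟨E, hE, hric, hst, huniq⟩ := riccati_unique_stabilizing_possemidef_solution_general
    (A := A) (posSemidef_self_mul_conjTranspose B) (posSemidef_conjTranspose_mul_self C)
    (fun lam hlam y hy hBy ↦
      hstab lam hlam y hy ((self_mul_conjTranspose_mulVec_eq_zero B y).mp hBy))
    (fun lam hlam x hx hCx ↦
      hdet lam hlam.ge x hx ((conjTranspose_mul_self_mulVec_eq_zero C x).mp hCx))
  exact ⟨E, ⟨hE, hric, hst⟩, fun E' h ↦ huniq E' h.2.1 h.2.2⟩
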